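/- arXiv:1003.3502 — 5 statements merged into one kernel-verified Lean document; each statement's English description precedes it below -/
import Mathlib

section
/- Let G be a finite group, k a field whose characteristic does not divide the order of G, and let S, R, A be commutative k-algebras each equipped with an action of G by k-algebra automorphisms. Let f : S → R and σ : S → A be G-equivariant k-algebra homomorphisms, and let I ⊆ A be a G-invariant ideal with I² = 0, so that G acts on A/I and the quotient map π : A → A/I is G-equivariant. Let p : R → A/I be a G-equivariant k-algebra homomorphism with p ∘ f = π ∘ σ. If there exists a (not necessarily equivariant) k-algebra homomorphism h : R → A with π ∘ h = p and h ∘ f = σ, then there exists a G-equivariant k-algebra homomorphism h̃ : R → A with π ∘ h̃ = p and h̃ ∘ f = σ. -/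
/-- Equivariant infinitesimal lifting lemma (Lemma 2.1): if a lifting of `p`
exists, a `G`-equivariant lifting exists, provided `char k` does not divide `|G|`. -/
theorem stmt0 {k : Type*} [Field k] (G : Type*) [Group G] [Fintype G]
    (hchar : ¬ (ringChar k ∣ Fintype.card G))
    {S R A B : Type*} [CommRing S] [CommRing R] [CommRing A] [CommRing B]
    [Algebra k S] [Algebra k R] [Algebra k A] [Algebra k B]
    [MulSemiringAction G S] [MulSemiringAction G R] [MulSemiringAction G A]
    [MulSemiringAction G B]
    [SMulCommClass G k S] [SMulCommClass G k R] [SMulCommClass G k A]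
    [SMulCommClass G k B]
    (f : S →ₐ[k] R) (hf : ∀ (g : G) (s : S), f (g • s) = g • f s)
    (σ : S →ₐ[k] A) (hσ : ∀ (g : G) (s : S), σ (g • s) = g • σ s)
    (I : Ideal A) (hI2 : I ^ 2 = ⊥) (hIG : ∀ (g : G), ∀ x ∈ I, g • x ∈ I)
    -- `π : A → B` plays the role of the quotient map `A → A/I`
    (π : A →ₐ[k] B) (hπsurj : Function.Surjective π)
    (hπker : RingHom.ker (π : A →+* B) = I)
    (hπ : ∀ (g : G) (a : A), π (g • a) = g • π a)
    (p : R →ₐ[k] B) (hp : ∀ (g : G) (r : R), p (g • r) = g • p r)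
    (hpf : p.comp f = π.comp σ)
    (h : R →ₐ[k] A) (hh1 : π.comp h = p) (hh2 : h.comp f = σ) :
    ∃ ht : R →ₐ[k] A, (∀ (g : G) (r : R), ht (g • r) = g • ht r) ∧
      π.comp ht = p ∧ ht.comp f = σ := by
  classical
  have hn : ((Fintype.card G : ℕ) : k) ≠ 0 := fun h0 => hchar ((ringChar.spec k _).1 h0)
  set n : k := ((Fintype.card G : ℕ) : k) with hndef
  have havg : ∀ {M : Type _} [AddCommGroup M] [Module k M] (x : M),
      n⁻¹ • ∑ _g : G, x = x := by
    intro M _ _ x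
    rw [Finset.sum_const, Finset.card_univ, ← Nat.cast_smul_eq_nsmul k, smul_smul,
      inv_mul_cancel₀ hn, one_smul]
  let H : G → R → A := fun g r => g • h (g⁻¹ • r)
  have Hmul : ∀ g r s, H g (r * s) = H g r * H g s := by
    intro g r s; simp only [H, smul_mul', map_mul]
  have Hπ : ∀ g r, π (H g r) = p r := by
    intro g r
    have : π (h (g⁻¹ • r)) = p (g⁻¹ • r) := DFunLike.congr_fun hh1 _
    simp only [H]
    rw [hπ, this, hp, smul_inv_smul]
  have Hf : ∀ g s, H g (f s) = σ s := by
    intro g s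
    have : h (f (g⁻¹ • s)) = σ (g⁻¹ • s) := DFunLike.congr_fun hh2 _
    simp only [H]
    rw [← hf, this, hσ, smul_inv_smul]
  let T : R →ₗ[k] A :=
    { toFun := fun r => n⁻¹ • ∑ g : G, H g r
      map_add' := by
        intro r s
        simp only [H, smul_add, map_add, Finset.sum_add_distrib]
      map_smul' := by
        intro c r
        have : ∀ g, H g (c • r) = c • H g r := by
          intro g
          simp only [H]
          rw [smul_comm, map_smul, smul_comm]
        simp only [this, ← Finset.smul_sum, RingHom.id_apply]
        rw [smul_comm] }
  have Tdef : ∀ r, T r = n⁻¹ • ∑ g : G, H g r := fun _ => rfl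
  have Tπ : ∀ r, π (T r) = p r := by
    intro r
    rw [Tdef, map_smul, map_sum]
    simp only [Hπ]
    rw [Finset.sum_const, Finset.card_univ, ← Nat.cast_smul_eq_nsmul k, smul_smul, ← hndef,
      inv_mul_cancel₀ hn, one_smul]
  have Tsum : ∀ r, ∑ g : G, H g r = n • T r := by
    intro r; rw [Tdef, smul_smul, mul_inv_cancel₀ hn, one_smul]
  have Tone : T 1 = 1 := by
    rw [Tdef]
    simp [H, smul_one, ← Nat.cast_smul_eq_nsmul k, smul_smul, hn, ← hndef]
    try rw [← Algebra.smul_def]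
  have Tmul : ∀ r s, T (r * s) = T r * T s := by
    intro r s
    have hmem : ∀ g r, H g r - T r ∈ I := by
      intro g r
      rw [← hπker, RingHom.mem_ker]
      change π (H g r - T r) = 0
      rw [map_sub, Hπ, Tπ, sub_self]
    have h0 : ∀ g, (H g r - T r) * (H g s - T s) = 0 := by
      intro g
      have := Ideal.mul_mem_mul (hmem g r) (hmem g s)
      rwa [← pow_two, hI2, Ideal.mem_bot] at this
    have h1 : ∀ g, H g (r * s) = H g r * T s + T r * H g s - T r * T s := by
      intro g
      rw [Hmul]
      linear_combination h0 g
    have h2 : n • T (r * s) = n • (T r * T s) := by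
      rw [← Tsum]
      simp only [h1]
      rw [Finset.sum_sub_distrib, Finset.sum_add_distrib, ← Finset.sum_mul, ← Finset.mul_sum,
        Tsum, Tsum, Finset.sum_const, Finset.card_univ, ← Nat.cast_smul_eq_nsmul k,
        smul_mul_assoc, mul_smul_comm, ← hndef, add_sub_cancel_right]
    exact smul_right_injective A hn h2
  refine ⟨AlgHom.ofLinearMap T Tone Tmul, ?_, ?_, ?_⟩
  · intro g r
    change T (g • r) = g • T r
    rw [Tdef, Tdef, smul_comm g n⁻¹]
    congr 1
    rw [Finset.smul_sum]
    refine Fintype.sum_equiv (Equiv.mulLeft g⁻¹) _ _ ?_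
    intro x
    simp [H, smul_smul]
  · ext r
    exact Tπ r
  · ext s
    change T (f s) = σ s
    rw [Tdef]
    simp only [Hf]
    exact havg _
end

section
/- Let G be a finite group, k a field whose characteristic does not divide the order of G, and let S, R be commutative k-algebras each equipped with an action of G by k-algebra automorphisms. Let f : S → R be a G-equivariant k-algebra homomorphism making R a formally smooth S-algebra. Then for every commutative k-algebra A with an action of G by k-algebra automorphisms, every G-equivariant k-algebra homomorphism σ : S → A, every G-invariant ideal I ⊆ A with I² = 0 (with π : A → A/I the quotient map), and every G-equivariant k-algebra homomorphism p : R → A/I with p ∘ f = π ∘ σ, there exists a G-equivariant k-algebra homomorphism h : R → A with π ∘ h = p and h ∘ f = σ. -/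
universe u

/-- Formally smooth morphisms admit `G`-equivariant infinitesimal liftings
(Lemma 2.1 combined with formal smoothness). -/
theorem stmt5 {k : Type u} [Field k] (G : Type u) [Group G] [Fintype G]
    (hchar : ¬ (ringChar k ∣ Fintype.card G))
    {S R : Type u} [CommRing S] [CommRing R] [Algebra k S] [Algebra k R]
    [MulSemiringAction G S] [MulSemiringAction G R]
    [SMulCommClass G k S] [SMulCommClass G k R]
    (f : S →ₐ[k] R) (hf : ∀ (g : G) (s : S), f (g • s) = g • f s)
    -- `R` is a formally smooth `S`-algebra (via `f`): liftings along square-zero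
    -- extensions exist, compatibly with the `S`-algebra structures.
    (hsmooth : ∀ (A : Type u) [CommRing A] [Algebra k A] (I : Ideal A),
      I ^ 2 = ⊥ →
      ∀ (σ : S →ₐ[k] A) (p : R →ₐ[k] A ⧸ I),
        p.comp f = (Ideal.Quotient.mkₐ k I).comp σ →
        ∃ h : R →ₐ[k] A, (Ideal.Quotient.mkₐ k I).comp h = p ∧ h.comp f = σ) :
    ∀ (A B : Type u) [CommRing A] [CommRing B] [Algebra k A] [Algebra k B]
      [MulSemiringAction G A] [MulSemiringAction G B]
      [SMulCommClass G k A] [SMulCommClass G k B]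
      (σ : S →ₐ[k] A), (∀ (g : G) (s : S), σ (g • s) = g • σ s) →
      ∀ (I : Ideal A), I ^ 2 = ⊥ → (∀ (g : G), ∀ x ∈ I, g • x ∈ I) →
      -- `π : A → B` plays the role of the quotient map `A → A/I`
      ∀ (π : A →ₐ[k] B), Function.Surjective π →
        RingHom.ker (π : A →+* B) = I →
        (∀ (g : G) (a : A), π (g • a) = g • π a) →
      ∀ (p : R →ₐ[k] B), (∀ (g : G) (r : R), p (g • r) = g • p r) →
        p.comp f = π.comp σ →
        ∃ h : R →ₐ[k] A, (∀ (g : G) (r : R), h (g • r) = g • h r) ∧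
          π.comp h = p ∧ h.comp f = σ := by
  intro A B _ _ _ _ _ _ _ _ σ hσ I hI hGI π hπ hker hπG p hp hpf
  have hmem : ∀ a : A, a ∈ I ↔ π a = 0 := by
    intro a; rw [← hker]; exact RingHom.mem_ker
  have hz : ∀ a b : A, π a = 0 → π b = 0 → a * b = 0 := by
    intro a b ha hb
    have h1 : a * b ∈ I ^ 2 := by
      rw [pow_two]; exact Ideal.mul_mem_mul ((hmem a).2 ha) ((hmem b).2 hb)
    rw [hI] at h1
    simpa using h1
  -- a not necessarily equivariant lift
  obtain ⟨h₀, h₀p, h₀f⟩ : ∃ h : R →ₐ[k] A, π.comp h = p ∧ h.comp f = σ := by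
    let e := Ideal.quotientKerAlgEquivOfSurjective (f := π) hπ
    have he : ∀ a : A, e (Ideal.Quotient.mk _ a) = π a := fun a => rfl
    have hI' : (RingHom.ker π) ^ 2 = ⊥ := by
      rw [← hI, ← hker]; rfl
    obtain ⟨h, h1, h2⟩ := hsmooth A (RingHom.ker π) hI' σ
      ((e.symm : B →ₐ[k] _).comp p) (by
        ext s
        have := congrArg (fun q => q s) hpf
        simp only [AlgHom.comp_apply] at this
        simp only [AlgHom.comp_apply, this]
        exact e.symm_apply_apply (Ideal.Quotient.mk _ (σ s)))
    refine ⟨h, ?_, h2⟩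
    ext r
    have := congrArg (fun q => e (q r)) h1
    simpa [he] using this
  have h₀p' : ∀ r, π (h₀ r) = p r := fun r => congrArg (fun q => q r) h₀p
  have h₀f' : ∀ s, h₀ (f s) = σ s := fun r => congrArg (fun q => q r) h₀f
  have hn : (Fintype.card G : k) ≠ 0 := fun h => hchar ((ringChar.spec k _).1 h)
  set c : k := (Fintype.card G : k)⁻¹ with hc
  have avg : ∀ {M : Type u} [AddCommGroup M] [Module k M] (m : M),
      c • ∑ _g : G, m = m := by
    intro M _ _ m
    rw [Finset.sum_const, Finset.card_univ, ← Nat.cast_smul_eq_nsmul k, smul_smul, hc,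
      inv_mul_cancel₀ hn, one_smul]
  let H : R → A := fun r => c • ∑ g : G, g • h₀ (g⁻¹ • r)
  have hHdef : ∀ r, H r = c • ∑ g : G, g • h₀ (g⁻¹ • r) := fun r => rfl
  have hgp : ∀ (g : G) (r : R), π (g • h₀ (g⁻¹ • r)) = p r := by
    intro g r; rw [hπG, h₀p', hp, smul_inv_smul]
  have hHp : ∀ r, π (H r) = p r := by
    intro r
    rw [hHdef, map_smul, map_sum]
    simp only [hgp]
    exact avg _
  have hHf : ∀ s, H (f s) = σ s := by
    intro s
    rw [hHdef]
    simp only [← hf, h₀f', hσ, smul_inv_smul]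
    exact avg _
  have hadd : ∀ x y, H (x + y) = H x + H y := by
    intro x y
    simp only [hHdef, smul_add, map_add, Finset.sum_add_distrib]
  have hmul : ∀ x y, H (x * y) = H x * H y := by
    intro x y
    have key : ∀ g : G, g • h₀ (g⁻¹ • (x * y)) =
        (g • h₀ (g⁻¹ • x)) * h₀ y + h₀ x * (g • h₀ (g⁻¹ • y)) - h₀ x * h₀ y := by
      intro g
      have := hz (g • h₀ (g⁻¹ • x) - h₀ x) (g • h₀ (g⁻¹ • y) - h₀ y)
        (by rw [map_sub, hgp, h₀p', sub_self]) (by rw [map_sub, hgp, h₀p', sub_self])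
      rw [smul_mul', map_mul, smul_mul']
      linear_combination this
    have h1 : H (x * y) = H x * h₀ y + h₀ x * H y - h₀ x * h₀ y := by
      rw [hHdef, Finset.sum_congr rfl (fun g _ => key g), Finset.sum_sub_distrib,
        Finset.sum_add_distrib, ← Finset.sum_mul, ← Finset.mul_sum, smul_sub, smul_add, avg,
        hHdef, hHdef, smul_mul_assoc, mul_smul_comm]
    have := hz (H x - h₀ x) (H y - h₀ y)
      (by rw [map_sub, hHp, h₀p', sub_self]) (by rw [map_sub, hHp, h₀p', sub_self])
    rw [h1]
    linear_combination -this
  have halg : ∀ a : k, H (algebraMap k R a) = algebraMap k A a := by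
    intro a
    rw [← f.commutes, hHf, σ.commutes]
  have hone : H 1 = 1 := by simpa using halg 1
  have hzero : H 0 = 0 := by simpa using halg 0
  refine ⟨{ toFun := H, map_one' := hone, map_mul' := hmul, map_zero' := hzero,
            map_add' := hadd, commutes' := halg }, ?_, ?_, ?_⟩
  · intro g r
    change H (g • r) = g • H r
    rw [hHdef, hHdef, smul_comm g c, Finset.smul_sum (r := g)]
    congr 1
    symm
    apply Fintype.sum_equiv (Equiv.mulLeft g)
    intro t
    simp [smul_smul]
  · ext r; exact hHp r
  · ext s; exact hHf s
end

section
/- Let G be a finite group, k a field whose characteristic does not divide the order of G, S a commutative k-algebra with an action of G by k-algebra automorphisms, and m ⊆ S a G-invariant ideal. Let R be a commutative k-algebra with G-action and f : S → R a G-equivariant k-algebra homomorphism making R a formally smooth S-algebra. Suppose there exists a G-equivariant k-algebra homomorphism s₁ : R → S/m such that s₁ ∘ f equals the quotient map S → S/m. Then for every integer n ≥ 1 there exists a G-equivariant k-algebra homomorphism sₙ : R → S/mⁿ such that sₙ ∘ f equals the quotient map S → S/mⁿ and the composition of sₙ with the projection S/mⁿ → S/m equals s₁. -/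
universe u

theorem avg_aux {k : Type*} [Field k] (G : Type*) [Group G] [Fintype G]
    (hN : (Fintype.card G : k) ≠ 0)
    {R B : Type*} [CommRing R] [CommRing B] [Algebra k R] [Algebra k B]
    [MulSemiringAction G R] [SMulCommClass G k R]
    (ρ : G →* (B →ₐ[k] B)) (I : Ideal B) (hI : ∀ x ∈ I, ∀ y ∈ I, x * y = 0)
    (h : R →ₐ[k] B) (hd : ∀ g r, ρ g (h (g⁻¹ • r)) - h r ∈ I) :
    ∃ h' : R →ₐ[k] B, (∀ g r, h' (g • r) = ρ g (h' r)) ∧ (∀ r, h' r - h r ∈ I) ∧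
      (∀ r, (∀ g, ρ g (h (g⁻¹ • r)) = h r) → h' r = h r) := by
  classical
  let H : G → R →ₐ[k] B := fun g => (ρ g).comp (h.comp (MulSemiringAction.toAlgHom k R g⁻¹))
  have H_apply : ∀ g r, H g r = ρ g (h (g⁻¹ • r)) := fun g r => rfl
  let N : k := (Fintype.card G : k)
  let L : R →ₗ[k] B := N⁻¹ • ∑ g, (H g).toLinearMap
  have L_apply : ∀ r, L r = N⁻¹ • ∑ g, H g r := fun r => by
    simp [L, LinearMap.sum_apply]
  have havg : ∀ b : B, N⁻¹ • ∑ _g : G, b = b := fun b => by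
    rw [Finset.sum_const, Finset.card_univ, ← Nat.cast_smul_eq_nsmul k, smul_smul,
      inv_mul_cancel₀ hN, one_smul]
  have hfix : ∀ r, (∀ g, ρ g (h (g⁻¹ • r)) = h r) → L r = h r := fun r hr => by
    rw [L_apply, Finset.sum_congr rfl (fun g _ => (H_apply g r).trans (hr g)), havg]
  have L_sub : ∀ r, L r - h r = N⁻¹ • ∑ g, (H g r - h r) := fun r => by
    rw [Finset.sum_sub_distrib, smul_sub, havg, L_apply]
  have hLI : ∀ r, L r - h r ∈ I := fun r => by
    rw [L_sub, Algebra.smul_def]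
    exact I.mul_mem_left _ (I.sum_mem fun g _ => hd g r)
  have hmul : ∀ a b, L (a * b) = L a * L b := fun a b => by
    have e1 : L (a * b) - h (a * b) = h a * (L b - h b) + (L a - h a) * h b := by
      rw [L_sub, L_sub, L_sub, mul_smul_comm, smul_mul_assoc, ← smul_add, Finset.mul_sum,
        Finset.sum_mul, ← Finset.sum_add_distrib]
      congr 1
      refine Finset.sum_congr rfl fun g _ => ?_
      have := hI _ (hd g a) _ (hd g b)
      rw [← H_apply, ← H_apply] at this
      rw [map_mul, map_mul]
      linear_combination this
    have e2 := hI _ (hLI a) _ (hLI b)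
    rw [map_mul h] at e1
    linear_combination e1 - e2
  have hone : L 1 = 1 := by
    rw [hfix 1 (fun g => by simp), map_one]
  refine ⟨AlgHom.ofLinearMap L hone hmul, fun g r => ?_, hLI, hfix⟩
  change L (g • r) = ρ g (L r)
  rw [L_apply, L_apply, map_smul, map_sum]
  congr 1
  rw [← Equiv.sum_comp (Equiv.mulLeft g)]
  refine Finset.sum_congr rfl fun y _ => ?_
  simp [H_apply, smul_smul, mul_assoc]

/-- the induced action on a quotient -/
theorem exists_rho {k : Type*} [Field k] (G : Type*) [Group G]
    {S : Type*} [CommRing S] [Algebra k S] [MulSemiringAction G S] [SMulCommClass G k S]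
    (J : Ideal S) (hJ : ∀ (g : G), ∀ x ∈ J, g • x ∈ J) :
    ∃ ρ : G →* (S ⧸ J →ₐ[k] S ⧸ J), ∀ g a,
      ρ g (Ideal.Quotient.mk J a) = Ideal.Quotient.mk J (g • a) := by
  let r : G → (S ⧸ J →ₐ[k] S ⧸ J) := fun g =>
    Ideal.quotientMapₐ J (MulSemiringAction.toAlgHom k S g) (fun x hx => hJ g x hx)
  have hr : ∀ g a, r g (Ideal.Quotient.mk J a) = Ideal.Quotient.mk J (g • a) := fun g a => rfl
  refine ⟨⟨⟨r, ?_⟩, ?_⟩, hr⟩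
  · ext x
    obtain ⟨a, rfl⟩ := Ideal.Quotient.mk_surjective x
    rw [hr, one_smul]; rfl
  · intro g g'
    ext x
    obtain ⟨a, rfl⟩ := Ideal.Quotient.mk_surjective x
    rw [AlgHom.mul_apply, hr, hr, hr, mul_smul]

theorem pow_inv_aux {G : Type*} [Group G] {S : Type*} [CommRing S] [MulSemiringAction G S]
    (m : Ideal S) (hmG : ∀ (g : G), ∀ x ∈ m, g • x ∈ m) (n : ℕ) :
    ∀ (g : G), ∀ x ∈ m ^ n, g • x ∈ m ^ n := by
  intro g x hx
  have h1 : m.map (MulSemiringAction.toRingHom G S g) ≤ m :=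
    Ideal.map_le_iff_le_comap.2 fun x hx => hmG g x hx
  have h2 := Ideal.mem_map_of_mem (MulSemiringAction.toRingHom G S g) hx
  rw [Ideal.map_pow] at h2
  exact Ideal.pow_right_mono h1 n h2

/-- Corollary 2.3 (algebraic content): a `G`-equivariant section modulo `m` of a
formally smooth equivariant morphism extends to `G`-equivariant sections modulo
every power `mⁿ`. Equivariance of maps into the quotients `S/mⁿ` is expressed via
the quotient map `Ideal.Quotient.mk`. -/
theorem stmt6 {k : Type u} [Field k] (G : Type u) [Group G] [Fintype G]
    (hchar : ¬ (ringChar k ∣ Fintype.card G))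
    {S R : Type u} [CommRing S] [CommRing R] [Algebra k S] [Algebra k R]
    [MulSemiringAction G S] [MulSemiringAction G R]
    [SMulCommClass G k S] [SMulCommClass G k R]
    (m : Ideal S) (hmG : ∀ (g : G), ∀ x ∈ m, g • x ∈ m)
    (f : S →ₐ[k] R) (hf : ∀ (g : G) (s : S), f (g • s) = g • f s)
    -- `R` is a formally smooth `S`-algebra (via `f`)
    (hsmooth : ∀ (A : Type u) [CommRing A] [Algebra k A] (I : Ideal A),
      I ^ 2 = ⊥ →
      ∀ (σ : S →ₐ[k] A) (p : R →ₐ[k] A ⧸ I),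
        p.comp f = (Ideal.Quotient.mkₐ k I).comp σ →
        ∃ h : R →ₐ[k] A, (Ideal.Quotient.mkₐ k I).comp h = p ∧ h.comp f = σ)
    (s₁ : R →ₐ[k] S ⧸ m)
    (hs₁f : s₁.comp f = Ideal.Quotient.mkₐ k m)
    -- `s₁` is `G`-equivariant for the action on `S ⧸ m` induced from `S`
    (hs₁G : ∀ (g : G) (r : R) (a : S), s₁ r = Ideal.Quotient.mk m a →
      s₁ (g • r) = Ideal.Quotient.mk m (g • a)) :
    ∀ n : ℕ, 1 ≤ n →
      ∃ sn : R →ₐ[k] S ⧸ (m ^ n),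
        (∀ (g : G) (r : R) (a : S), sn r = Ideal.Quotient.mk (m ^ n) a →
          sn (g • r) = Ideal.Quotient.mk (m ^ n) (g • a)) ∧
        sn.comp f = Ideal.Quotient.mkₐ k (m ^ n) ∧
        (∀ (r : R) (a : S), sn r = Ideal.Quotient.mk (m ^ n) a →
          s₁ r = Ideal.Quotient.mk m a) := by
  have hN : (Fintype.card G : k) ≠ 0 := fun h => hchar ((ringChar.spec k _).1 h)
  intro n hn
  induction n, hn using Nat.le_induction with
  | base =>
    have hle : m ≤ m ^ 1 := (pow_one m).ge
    have key : ∀ (r : R) (a : S), Ideal.Quotient.factorₐ k hle (s₁ r) =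
        Ideal.Quotient.mk (m ^ 1) a → s₁ r = Ideal.Quotient.mk m a := by
      intro r a h
      obtain ⟨b, hb⟩ := Ideal.Quotient.mk_surjective (s₁ r)
      rw [← hb] at h ⊢
      have h : Ideal.Quotient.mk (m ^ 1) b = Ideal.Quotient.mk (m ^ 1) a := h
      rw [Ideal.Quotient.eq, pow_one] at h
      exact Ideal.Quotient.eq.2 h
    refine ⟨(Ideal.Quotient.factorₐ k hle).comp s₁, ?_, ?_, key⟩
    · intro g r a h
      rw [AlgHom.comp_apply, hs₁G g r a (key r a h)]
      rfl
    · rw [AlgHom.comp_assoc, hs₁f]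
      rfl
  | succ n hn ih =>
    obtain ⟨sn, hG, hsf, hs⟩ := ih
    obtain ⟨ρ, hρ⟩ := exists_rho (k := k) G (m ^ (n + 1)) (pow_inv_aux m hmG (n + 1))
    let π : S ⧸ m ^ (n + 1) →ₐ[k] S ⧸ m ^ n :=
      Ideal.Quotient.factorₐ k (Ideal.pow_le_pow_right n.le_succ)
    have hπ : ∀ a, π (Ideal.Quotient.mk _ a) = Ideal.Quotient.mk _ a := fun a => rfl
    have hπs : Function.Surjective π := fun y => by
      obtain ⟨a, rfl⟩ := Ideal.Quotient.mk_surjective y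
      exact ⟨_, hπ a⟩
    have hI : ∀ x ∈ RingHom.ker π, ∀ y ∈ RingHom.ker π, x * y = 0 := by
      intro x hx y hy
      obtain ⟨a, rfl⟩ := Ideal.Quotient.mk_surjective x
      obtain ⟨b, rfl⟩ := Ideal.Quotient.mk_surjective y
      rw [RingHom.mem_ker, hπ, Ideal.Quotient.eq_zero_iff_mem] at hx hy
      rw [← map_mul, Ideal.Quotient.eq_zero_iff_mem]
      have := Ideal.mul_mem_mul hx hy
      rw [← pow_add] at this
      exact Ideal.pow_le_pow_right (by omega) this
    have hI2 : (RingHom.ker π) ^ 2 = ⊥ := by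
      rw [pow_two, eq_bot_iff, Ideal.mul_le]
      intro x hx y hy
      exact (Submodule.mem_bot _).2 (hI x hx y hy)
    let e := Ideal.quotientKerAlgEquivOfSurjective hπs
    have he : ∀ x, e (Ideal.Quotient.mk _ x) = π x := fun x => rfl
    obtain ⟨h, hh, hhf⟩ := hsmooth (S ⧸ m ^ (n + 1)) (RingHom.ker π) hI2
      (Ideal.Quotient.mkₐ k _) (e.symm.toAlgHom.comp sn) (by
        rw [AlgHom.comp_assoc, hsf]
        ext x
        change e.symm _ = _
        rw [AlgEquiv.symm_apply_eq]
        rfl)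
    have hπh : ∀ r, π (h r) = sn r := fun r => by
      have := DFunLike.congr_fun hh r
      have h2 : Ideal.Quotient.mk (RingHom.ker π) (h r) = e.symm (sn r) := this
      rw [← he, h2, AlgEquiv.apply_symm_apply]
    have hhf' : ∀ s, h (f s) = Ideal.Quotient.mk _ s := fun s => DFunLike.congr_fun hhf s
    obtain ⟨h', h1, h2, h3⟩ := avg_aux G hN ρ (RingHom.ker π) hI h (by
      intro g r
      obtain ⟨a, ha⟩ := Ideal.Quotient.mk_surjective (h (g⁻¹ • r))
      rw [RingHom.mem_ker, map_sub, hπh, ← ha, hρ, hπ, sub_eq_zero]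
      have := hG g (g⁻¹ • r) a (by rw [← hπh, ← ha, hπ])
      rw [smul_inv_smul] at this
      exact this.symm)
    have hπh' : ∀ r, π (h' r) = sn r := fun r => by
      have := h2 r
      rw [RingHom.mem_ker, map_sub, sub_eq_zero] at this
      rw [this, hπh]
    refine ⟨h', ?_, ?_, ?_⟩
    · intro g r a ha
      rw [h1, ha, hρ]
    · ext s
      change h' (f s) = Ideal.Quotient.mk _ s
      rw [h3 (f s) (fun g => by rw [← hf, hhf', hhf', hρ, smul_inv_smul]), hhf']
    · intro r a ha
      exact hs r a (by rw [← hπh', ha, hπ])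
end

section
/- There exist λ, a, b, c ∈ ℂ with a ≠ 0 such that, setting f₀ = S⁵ + λ S T⁴, f₁ = a T⁵, f₂ = b S² T³, f₃ = c S³ T² in the polynomial ring ℂ[S, T], one has the identity f₀² f₁ + f₁² f₂ + f₂³ + f₃² f₁ + f₀ f₂ f₃ = 0 in ℂ[S, T]. -/
open MvPolynomial

/-- Example 4.5: there exist `λ, a, b, c ∈ ℂ` with `a ≠ 0` such that the curve
`[S,T] ↦ [S⁵ + λST⁴, aT⁵, bS²T³, cS³T²]` lies on the cubic surface
`X₀²X₁ + X₁²X₂ + X₂³ + X₃²X₁ + X₀X₂X₃ = 0`. -/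
theorem stmt9 :
    ∃ lam a b c : ℂ, a ≠ 0 ∧
      (let S : MvPolynomial (Fin 2) ℂ := X 0
       let T : MvPolynomial (Fin 2) ℂ := X 1
       let f₀ := S ^ 5 + C lam * S * T ^ 4
       let f₁ := C a * T ^ 5
       let f₂ := C b * S ^ 2 * T ^ 3
       let f₃ := C c * S ^ 3 * T ^ 2
       f₀ ^ 2 * f₁ + f₁ ^ 2 * f₂ + f₂ ^ 3 + f₃ ^ 2 * f₁ + f₀ * f₂ * f₃ = 0) := by
  obtain ⟨b, hb⟩ : ∃ b : ℂ, b ^ 2 = b + 1 := by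
    refine ⟨(Real.goldenRatio : ℂ), ?_⟩
    exact_mod_cast Real.goldenRatio_sq
  refine ⟨b, -b, b, 1, ?_, ?_⟩
  · intro h
    have h0 : b = 0 := neg_eq_zero.mp h
    rw [h0] at hb
    norm_num at hb
  · intro S T f₀ f₁ f₂ f₃
    have hB : (C b : MvPolynomial (Fin 2) ℂ) ^ 2 = C b + 1 := by
      rw [← C_pow, hb, C_add, C_1]
    simp only [f₀, f₁, f₂, f₃, C_neg, C_1]
    linear_combination (C b * S ^ 6 * T ^ 9) * hB
end

section
/- Let F = X₀² X₁ + X₁² X₂ + X₂³ + X₃² X₁ + X₀ X₂ X₃, a cubic form in four variables over ℂ. If a point (x₀, x₁, x₂, x₃) ∈ ℂ⁴ is a common zero of all four partial derivatives ∂F/∂X₀ = 2X₀X₁ + X₂X₃, ∂F/∂X₁ = X₀² + 2X₁X₂ + X₃², ∂F/∂X₂ = X₁² + 3X₂² + X₀X₃, and ∂F/∂X₃ = 2X₃X₁ + X₀X₂, then (x₀, x₁, x₂, x₃) = (0, 0, 0, 0). Consequently the projective cubic surface {F = 0} ⊂ ℙ³ is smooth. -/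
/-- Smoothness of the cubic surface of Example 4.5, via the Jacobian criterion:
the four partial derivatives of `F = X₀²X₁ + X₁²X₂ + X₂³ + X₃²X₁ + X₀X₂X₃` have no
common zero other than the origin. -/
theorem stmt10 (x₀ x₁ x₂ x₃ : ℂ)
    (h0 : 2 * x₀ * x₁ + x₂ * x₃ = 0)
    (h1 : x₀ ^ 2 + 2 * x₁ * x₂ + x₃ ^ 2 = 0)
    (h2 : x₁ ^ 2 + 3 * x₂ ^ 2 + x₀ * x₃ = 0)
    (h3 : 2 * x₃ * x₁ + x₀ * x₂ = 0) :
    (x₀, x₁, x₂, x₃) = ((0 : ℂ), (0 : ℂ), (0 : ℂ), (0 : ℂ)) := by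
  have sq : ∀ z : ℂ, z ^ 2 = 0 → z = 0 := fun z hz => pow_eq_zero_iff (two_ne_zero) |>.1 hz
  have key : x₁ = 0 ∧ x₂ = 0 := by
    have ha : x₀ * (4 * x₁ ^ 2 - x₂ ^ 2) = 0 := by linear_combination 2 * x₁ * h0 - x₂ * h3
    have hd : x₃ * (4 * x₁ ^ 2 - x₂ ^ 2) = 0 := by linear_combination 2 * x₁ * h3 - x₂ * h0
    by_cases hq : 4 * x₁ ^ 2 - x₂ ^ 2 = 0
    · have hb : x₁ = 0 := by
        by_contra hb
        have hf : (x₂ - 2 * x₁) * (x₂ + 2 * x₁) = 0 := by linear_combination -hq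
        rcases mul_eq_zero.1 hf with h | h
        · have hc : x₂ = 2 * x₁ := by linear_combination h
          subst hc
          have h4 : x₁ * (x₀ + x₃) = 0 := by linear_combination h0 / 2
          have h5 : x₀ + x₃ = 0 := (mul_eq_zero.1 h4).resolve_left hb
          have h6 : x₃ = -x₀ := by linear_combination h5
          subst h6
          exact hb (sq _ (by linear_combination h2 / 15 + h1 / 30))
        · have hc : x₂ = -2 * x₁ := by linear_combination h
          subst hc
          have h4 : x₁ * (x₀ - x₃) = 0 := by linear_combination h0 / 2
          have h5 : x₀ - x₃ = 0 := (mul_eq_zero.1 h4).resolve_left hb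
          have h6 : x₃ = x₀ := by linear_combination -h5
          subst h6
          exact hb (sq _ (by linear_combination h2 / 15 - h1 / 30))
      subst hb
      exact ⟨rfl, sq _ (by linear_combination -hq)⟩
    · have a0 := (mul_eq_zero.1 ha).resolve_right hq
      have d0 := (mul_eq_zero.1 hd).resolve_right hq
      subst a0 d0
      have hbc : x₁ * x₂ = 0 := by linear_combination h1 / 2
      rcases mul_eq_zero.1 hbc with h | h
      · subst h
        exact ⟨rfl, sq _ (by linear_combination h2 / 3)⟩
      · subst h
        exact ⟨sq _ (by linear_combination h2), rfl⟩
  obtain ⟨hb, hc⟩ := key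
  subst hb hc
  have had : x₀ * x₃ = 0 := by linear_combination h2
  rcases mul_eq_zero.1 had with h | h
  · subst h
    have : x₃ = 0 := sq _ (by linear_combination h1)
    rw [this]
  · subst h
    have : x₀ = 0 := sq _ (by linear_combination h1)
    rw [this]
end
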